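/- For all smooth compactly supported φ : ℝ³ → ℂ^n, and t(r) := 1 for r ≤ R, t(r) := R/r for r ≥ R (R > 0 fixed): 0 ≤ ∫_{ℝ³} t(r) r |∂_r φ + φ/r|² d³x = ∫_{ℝ³} t(r) r |∂_r φ|² d³x − ∫_{ℝ³} t(r) |φ|²/r d³x − ∫_{ℝ³} t'(r) |φ|² d³x, and consequently ∫_{ℝ³} t(r) r |∂_r φ|² d³x − ∫_{ℝ³} |φ|²/r d³x ≥ −(1/R) ∫_{|x| ≥ R} |φ|² d³x. -/

import Mathlib

open MeasureTheory Real

noncomputable def tCut (R r : ℝ) : ℝ := if r ≤ R then 1 else R / r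

noncomputable def tCut' (R r : ℝ) : ℝ := if r ≤ R then 0 else -(R / r ^ 2)

noncomputable def radDeriv {n : ℕ} (φ : EuclideanSpace ℝ (Fin 3) → EuclideanSpace ℂ (Fin n))
    (x : EuclideanSpace ℝ (Fin 3)) : EuclideanSpace ℂ (Fin n) :=
  (‖x‖)⁻¹ • fderiv ℝ φ x x

open Set in
theorem aux_polar (F : EuclideanSpace ℝ (Fin 3) → ℝ)
    (h : ∀ ω : EuclideanSpace ℝ (Fin 3), ‖ω‖ = 1 →
      ∫ r in Ioi (0:ℝ), r ^ 2 * F (r • ω) = 0) : ∫ x, F x = 0 := by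
  have h1 : ∫ x, F x = ∫ x : ({(0)}ᶜ : Set (EuclideanSpace ℝ (Fin 3))), F x.1
      ∂(volume.comap Subtype.val) := by
    rw [integral_subtype_comap (measurableSet_singleton _).compl fun x ↦ F x,
        restrict_compl_singleton]
  have h2 : ∫ x : ({(0)}ᶜ : Set (EuclideanSpace ℝ (Fin 3))), F x.1 ∂(volume.comap Subtype.val) =
      ∫ p, F (p.2.1 • p.1.1) ∂(volume : Measure (EuclideanSpace ℝ (Fin 3))).toSphere.prod
        (.volumeIoiPow (Module.finrank ℝ (EuclideanSpace ℝ (Fin 3)) - 1)) := by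
    rw [← (volume : Measure (EuclideanSpace ℝ (Fin 3))).measurePreserving_homeomorphUnitSphereProd.integral_comp
        (Homeomorph.measurableEmbedding _)]
    refine integral_congr_ae (.of_forall fun x => ?_)
    have hx : ‖x.1‖ ≠ 0 := norm_ne_zero_iff.2 x.2
    simp [smul_smul, hx]
  rw [h1, h2]
  by_cases hi : Integrable (fun p : Metric.sphere (0 : EuclideanSpace ℝ (Fin 3)) 1 × Ioi (0:ℝ) =>
      F (p.2.1 • p.1.1)) ((volume : Measure (EuclideanSpace ℝ (Fin 3))).toSphere.prod
        (.volumeIoiPow (Module.finrank ℝ (EuclideanSpace ℝ (Fin 3)) - 1)))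
  · rw [integral_prod _ hi]
    refine (integral_congr_ae (.of_forall fun ω => ?_)).trans (integral_zero' _ _)
    have hω : ‖ω.1‖ = 1 := by simpa using ω.2
    simp only [Measure.volumeIoiPow, ENNReal.ofReal, Pi.zero_apply]
    rw [integral_withDensity_eq_integral_smul]
    · rw [integral_subtype_comap measurableSet_Ioi
        fun a ↦ Real.toNNReal (a ^ (Module.finrank ℝ (EuclideanSpace ℝ (Fin 3)) - 1)) • F (a • ω.1)]
      refine Eq.trans ?_ (h ω.1 hω)
      refine setIntegral_congr_fun measurableSet_Ioi fun x hx ↦ ?_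
      simp only [NNReal.smul_def, Real.coe_toNNReal _ (pow_nonneg hx.out.le _)]
      simp
    · exact (measurable_subtype_coe.pow_const _).real_toNNReal
  · exact integral_undef hi

open Set in
theorem aux_line (h : ℝ → ℝ) (hh : ContDiff ℝ 1 h) (hc : HasCompactSupport h) (R : ℝ) (hR : 0 < R) :
    ∫ r in Ioi (0:ℝ), r ^ 2 * (tCut R r * deriv h r + tCut' R r * h r
      + 2 * (tCut R r * h r / r)) = 0 := by
  have c1 : ContDiff ℝ 1 (fun r : ℝ => r ^ 2 * h r) := by fun_prop
  have c2 : ContDiff ℝ 1 (fun r : ℝ => (R * r) * h r) := by fun_prop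
  have s1 : HasCompactSupport (fun r : ℝ => r ^ 2 * h r) := hc.mul_left
  have s2 : HasCompactSupport (fun r : ℝ => (R * r) * h r) := hc.mul_left
  have hd : ∀ r, HasDerivAt h (deriv h r) r := fun r =>
    (hh.differentiable one_ne_zero r).hasDerivAt
  have d1 : ∀ r, deriv (fun r : ℝ => r ^ 2 * h r) r = 2 * r * h r + r ^ 2 * deriv h r := by
    intro r
    have := ((hasDerivAt_id r).pow 2).mul (hd r)
    refine HasDerivAt.deriv (this.congr_deriv ?_)
    simp
  have d2 : ∀ r, deriv (fun r : ℝ => (R * r) * h r) r = R * h r + R * r * deriv h r := by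
    intro r
    have := ((hasDerivAt_id r).const_mul R).mul (hd r)
    refine HasDerivAt.deriv (this.congr_deriv ?_)
    simp
  have i1 : Integrable (deriv (fun r : ℝ => r ^ 2 * h r)) :=
    (c1.continuous_deriv le_rfl).integrable_of_hasCompactSupport s1.deriv
  have i2 : Integrable (deriv (fun r : ℝ => (R * r) * h r)) :=
    (c2.continuous_deriv le_rfl).integrable_of_hasCompactSupport s2.deriv
  have e1 : EqOn (deriv (fun r : ℝ => r ^ 2 * h r)) (fun r => r ^ 2 * (tCut R r * deriv h r
      + tCut' R r * h r + 2 * (tCut R r * h r / r))) (Ioc 0 R) := by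
    intro r hr
    have hr0 : r ≠ 0 := hr.1.ne'
    simp only [d1, tCut, tCut', if_pos hr.2]
    field_simp
    ring
  have e2 : EqOn (deriv (fun r : ℝ => (R * r) * h r)) (fun r => r ^ 2 * (tCut R r * deriv h r
      + tCut' R r * h r + 2 * (tCut R r * h r / r))) (Ioi R) := by
    intro r hr
    have hr0 : r ≠ 0 := (hR.trans hr).ne'
    simp only [d2, tCut, tCut', if_neg (not_le.2 (Set.mem_Ioi.1 hr))]
    field_simp
    ring
  rw [← Ioc_union_Ioi_eq_Ioi hR.le, setIntegral_union Ioc_disjoint_Ioi_same measurableSet_Ioi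
    (i1.integrableOn.congr_fun e1 measurableSet_Ioc)
    (i2.integrableOn.congr_fun e2 measurableSet_Ioi),
    ← setIntegral_congr_fun measurableSet_Ioc e1, ← setIntegral_congr_fun measurableSet_Ioi e2,
    s2.integral_Ioi_deriv_eq c2]
  have := s1.integral_Ioi_deriv_eq c1 0
  rw [← Ioc_union_Ioi_eq_Ioi hR.le, setIntegral_union Ioc_disjoint_Ioi_same measurableSet_Ioi
    i1.integrableOn i1.integrableOn, s1.integral_Ioi_deriv_eq c1] at this
  simp at this
  linarith [this, sq R]

open Set in
theorem aux_integrable (f : EuclideanSpace ℝ (Fin 3) → ℝ) (hf : Measurable f) (C M : ℝ)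
    (hM : ∀ x, M < ‖x‖ → f x = 0)
    (hb : ∀ x, x ≠ 0 → ‖x‖ ≤ M → |f x| ≤ C / ‖x‖) : Integrable f := by
  have hi : Integrable (fun x : EuclideanSpace ℝ (Fin 3) =>
      (Iic M).indicator (fun r => C / r) ‖x‖) := by
    rw [integrable_fun_norm_addHaar volume (f := (Iic M).indicator (fun r => C / r))]
    have h0 : IntegrableOn (fun r : ℝ => C * r) (Ioc 0 M) :=
      (Continuous.integrableOn_Icc (by fun_prop)).mono_set Ioc_subset_Icc_self
    have h1 : IntegrableOn ((Iic M).indicator (fun r : ℝ => C * r)) (Ioi 0) := by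
      rw [IntegrableOn, integrable_indicator_iff measurableSet_Iic, IntegrableOn,
        Measure.restrict_restrict measurableSet_Iic, inter_comm, Ioi_inter_Iic]
      exact h0
    refine h1.congr_fun (fun r hr => ?_) measurableSet_Ioi
    have hr0 : r ≠ 0 := (mem_Ioi.1 hr).ne'
    by_cases h : r ≤ M
    · simp [indicator, h]; field_simp
    · simp [indicator, h]
  refine hi.mono' hf.aestronglyMeasurable ?_
  have : ∀ᵐ x : EuclideanSpace ℝ (Fin 3), x ≠ 0 := by
    simp [ae_iff]
  filter_upwards [this] with x hx
  by_cases h : ‖x‖ ≤ M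
  · simpa [indicator, h] using hb x hx h
  · simp [indicator, h, hM x (not_le.1 h)]

theorem aux_deriv {n : ℕ} (φ : EuclideanSpace ℝ (Fin 3) → EuclideanSpace ℂ (Fin n))
    (hs : ContDiff ℝ (⊤ : ℕ∞) φ) (ω : EuclideanSpace ℝ (Fin 3)) (r : ℝ) :
    HasDerivAt (fun r : ℝ => ‖φ (r • ω)‖ ^ 2)
      (2 * (inner ℂ (φ (r • ω)) (fderiv ℝ φ (r • ω) ω)).re) r := by
  have h1 : HasDerivAt (fun r : ℝ => r • ω) ω r := by
    simpa using (hasDerivAt_id r).smul_const ω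
  have h2 : HasDerivAt (fun r : ℝ => φ (r • ω)) (fderiv ℝ φ (r • ω) ω) r :=
    ((hs.differentiable (by simp)) (r • ω)).hasFDerivAt.comp_hasDerivAt r h1
  have h3 := HasDerivAt.inner ℂ h2 h2
  have h4 := Complex.reCLM.hasFDerivAt.comp_hasDerivAt r h3
  have e : (fun r : ℝ => ‖φ (r • ω)‖ ^ 2) =
      (Complex.reCLM ∘ fun t => inner ℂ (φ (t • ω)) (φ (t • ω))) := by
    funext t
    simp only [Function.comp, Complex.reCLM_apply]
    exact norm_sq_eq_re_inner (𝕜 := ℂ) _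
  rw [e]
  refine h4.congr_deriv ?_
  have := inner_re_symm (𝕜 := ℂ) (φ (r • ω)) (fderiv ℝ φ (r • ω) ω)
  simp only [RCLike.re_to_complex] at this
  simp only [Complex.reCLM_apply, Complex.add_re]
  linarith

theorem aux_meas (R : ℝ) : Measurable (tCut R) ∧ Measurable (tCut' R) := by
  constructor
  · exact Measurable.ite measurableSet_Iic (by fun_prop) (by fun_prop)
  · exact Measurable.ite measurableSet_Iic (by fun_prop) (by fun_prop)

theorem aux_tCut (R r : ℝ) (hR : 0 < R) : 0 ≤ tCut R r ∧ tCut R r ≤ 1 := by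
  unfold tCut
  split_ifs with h
  · simp
  · have : 0 < r := by linarith
    refine ⟨by positivity, ?_⟩
    rw [div_le_one this]; linarith

theorem aux_tCut' (R r : ℝ) (hR : 0 < R) (hr : 0 < r) : |tCut' R r| ≤ 1 / r := by
  unfold tCut'
  split_ifs with h
  · simp; exact hr.le
  · rw [abs_neg, abs_of_nonneg (by positivity), div_le_div_iff₀ (by positivity) hr]
    nlinarith

theorem cutoff_radial_identity_and_bound {n : ℕ}
    (φ : EuclideanSpace ℝ (Fin 3) → EuclideanSpace ℂ (Fin n))
    (hs : ContDiff ℝ (⊤ : ℕ∞) φ) (hc : HasCompactSupport φ) (R : ℝ) (hR : 0 < R) :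
    (0 ≤ ∫ x : EuclideanSpace ℝ (Fin 3),
        tCut R ‖x‖ * ‖x‖ * ‖radDeriv φ x + (‖x‖)⁻¹ • φ x‖ ^ 2) ∧
    ((∫ x : EuclideanSpace ℝ (Fin 3),
        tCut R ‖x‖ * ‖x‖ * ‖radDeriv φ x + (‖x‖)⁻¹ • φ x‖ ^ 2) =
      (∫ x : EuclideanSpace ℝ (Fin 3), tCut R ‖x‖ * ‖x‖ * ‖radDeriv φ x‖ ^ 2) -
      (∫ x : EuclideanSpace ℝ (Fin 3), tCut R ‖x‖ * ‖φ x‖ ^ 2 / ‖x‖) -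
      (∫ x : EuclideanSpace ℝ (Fin 3), tCut' R ‖x‖ * ‖φ x‖ ^ 2)) ∧
    (-(1 / R) * ∫ x in {x : EuclideanSpace ℝ (Fin 3) | R ≤ ‖x‖}, ‖φ x‖ ^ 2) ≤
      (∫ x : EuclideanSpace ℝ (Fin 3), tCut R ‖x‖ * ‖x‖ * ‖radDeriv φ x‖ ^ 2) -
      (∫ x : EuclideanSpace ℝ (Fin 3), ‖φ x‖ ^ 2 / ‖x‖) := by
  obtain ⟨mt, mt'⟩ := aux_meas R
  have cφ : Continuous φ := hs.continuous
  have cf : Continuous (fderiv ℝ φ) := hs.continuous_fderiv (by simp)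
  have cfx : Continuous (fun x => fderiv ℝ φ x x) := cf.clm_apply continuous_id
  have mφ : Measurable φ := cφ.measurable
  have mD : Measurable (radDeriv φ) := by
    unfold radDeriv
    exact measurable_norm.inv.smul cfx.measurable
  obtain ⟨K1, hK1⟩ := hc.exists_bound_of_continuous cφ
  obtain ⟨K2, hK2⟩ := hc.fderiv (𝕜 := ℝ) |>.exists_bound_of_continuous cf
  obtain ⟨M, hM0, hM⟩ : ∃ M, 0 < M ∧ ∀ x, M < ‖x‖ → φ x = 0 := by
    obtain ⟨M, hM0, hM⟩ := hc.isCompact.isBounded.exists_pos_norm_le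
    refine ⟨M, hM0, fun x hx => ?_⟩
    by_contra h
    exact absurd (hM x (subset_tsupport _ h)) (not_le.2 hx)
  have hM2 : ∀ x, M < ‖x‖ → radDeriv φ x = 0 := by
    intro x hx
    have : φ =ᶠ[nhds x] fun _ => 0 := by
      filter_upwards [continuous_norm.continuousAt.eventually (lt_mem_nhds hx)] with y hy
      exact hM y hy
    simp [radDeriv, this.fderiv_eq]
  have hD : ∀ x, ‖radDeriv φ x‖ ≤ K2 := by
    intro x
    have hK0 : 0 ≤ K2 := (norm_nonneg _).trans (hK2 0)
    rcases eq_or_ne x 0 with rfl | hx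
    · simpa [radDeriv] using hK0
    · have hx' : 0 < ‖x‖ := norm_pos_iff.2 hx
      rw [radDeriv, norm_smul, norm_inv, norm_norm, inv_mul_le_iff₀ hx', mul_comm]
      exact (fderiv ℝ φ x).le_of_opNorm_le (hK2 x) x
  have K10 : 0 ≤ K1 := (norm_nonneg _).trans (hK1 0)
  have K20 : 0 ≤ K2 := (norm_nonneg _).trans (hK2 0)
  have q1 : ∀ x, ‖φ x‖ ^ 2 ≤ K1 ^ 2 := fun x => by gcongr; exact hK1 x
  have I1 : Integrable (fun x => tCut R ‖x‖ * ‖x‖ * ‖radDeriv φ x‖ ^ 2) := by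
    refine aux_integrable _ (by fun_prop) (M * M * K2 ^ 2) M (fun x hx => by simp [hM2 x hx]) ?_
    intro x hx hxM
    have hx' : 0 < ‖x‖ := norm_pos_iff.2 hx
    obtain ⟨t0, t1⟩ := aux_tCut R ‖x‖ hR
    rw [abs_of_nonneg (by positivity), le_div_iff₀ hx']
    calc _ ≤ 1 * M * K2 ^ 2 * M := by gcongr; exact hD x
      _ = _ := by ring
  have I2 : Integrable (fun x => tCut R ‖x‖ * ‖φ x‖ ^ 2 / ‖x‖) := by
    refine aux_integrable _ (by fun_prop) (K1 ^ 2) M (fun x hx => by simp [hM x hx]) ?_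
    intro x hx hxM
    have hx' : 0 < ‖x‖ := norm_pos_iff.2 hx
    obtain ⟨t0, t1⟩ := aux_tCut R ‖x‖ hR
    rw [abs_of_nonneg (by positivity)]
    gcongr
    calc _ ≤ 1 * K1 ^ 2 := by gcongr; exact hK1 x
      _ = _ := by ring
  have I3 : Integrable (fun x => tCut' R ‖x‖ * ‖φ x‖ ^ 2) := by
    refine aux_integrable _ (by fun_prop) (K1 ^ 2) M (fun x hx => by simp [hM x hx]) ?_
    intro x hx hxM
    have hx' : 0 < ‖x‖ := norm_pos_iff.2 hx
    rw [abs_mul, abs_of_nonneg (sq_nonneg ‖φ x‖)]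
    calc _ ≤ 1 / ‖x‖ * K1 ^ 2 := by
          gcongr
          · exact aux_tCut' R _ hR hx'
          · exact hK1 x
      _ = _ := by ring
  have I4 : Integrable (fun x => tCut R ‖x‖ * (2 * (inner ℂ (φ x) (radDeriv φ x)).re)) := by
    have : Measurable (fun x => (inner ℂ (φ x) (radDeriv φ x)).re) :=
      Complex.measurable_re.comp (mφ.inner mD)
    refine aux_integrable _ (by fun_prop) (2 * (K1 * K2) * M) M
      (fun x hx => by simp [hM x hx]) ?_
    intro x hx hxM
    have hx' : 0 < ‖x‖ := norm_pos_iff.2 hx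
    obtain ⟨t0, t1⟩ := aux_tCut R ‖x‖ hR
    have hi : |(inner ℂ (φ x) (radDeriv φ x)).re| ≤ K1 * K2 :=
      (Complex.abs_re_le_norm _).trans <| (norm_inner_le_norm _ _).trans <| by
        gcongr
        · exact hK1 x
        · exact hD x
    rw [abs_mul, abs_mul, abs_of_nonneg t0, abs_two, le_div_iff₀ hx']
    calc _ ≤ 1 * (2 * (K1 * K2)) * M := by gcongr
      _ = _ := by ring
  have I5 : Integrable (fun x => ‖φ x‖ ^ 2 / ‖x‖) := by
    refine aux_integrable _ (by fun_prop) (K1 ^ 2) M (fun x hx => by simp [hM x hx]) ?_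
    intro x hx hxM
    have hx' : 0 < ‖x‖ := norm_pos_iff.2 hx
    rw [abs_of_nonneg (by positivity)]
    gcongr
    exact hK1 x
  have I6 : Integrable (fun x => ‖φ x‖ ^ 2) := by
    refine aux_integrable _ (by fun_prop) (K1 ^ 2 * M) M (fun x hx => by simp [hM x hx]) ?_
    intro x hx hxM
    have hx' : 0 < ‖x‖ := norm_pos_iff.2 hx
    rw [abs_of_nonneg (by positivity), le_div_iff₀ hx']
    gcongr
    exact hK1 x
  have hzero : ∫ x : EuclideanSpace ℝ (Fin 3),
      (tCut R ‖x‖ * (2 * (inner ℂ (φ x) (radDeriv φ x)).re) + tCut' R ‖x‖ * ‖φ x‖ ^ 2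
        + 2 * (tCut R ‖x‖ * ‖φ x‖ ^ 2 / ‖x‖)) = 0 := by
    refine aux_polar _ fun ω hω => ?_
    have hcd : ContDiff ℝ 1 (fun r : ℝ => ‖φ (r • ω)‖ ^ 2) := by
      have h1 : ContDiff ℝ 1 (fun r : ℝ => φ (r • ω)) :=
        (hs.of_le (by exact_mod_cast le_top)).comp (contDiff_id.smul contDiff_const)
      have h2 := Complex.reCLM.contDiff.comp (h1.inner ℂ h1)
      convert h2 using 1
      funext t
      simp only [Function.comp, Complex.reCLM_apply]
      exact norm_sq_eq_re_inner (𝕜 := ℂ) _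
    have hcs : HasCompactSupport (fun r : ℝ => ‖φ (r • ω)‖ ^ 2) := by
      refine HasCompactSupport.intro (isCompact_Icc (a := -M) (b := M)) fun r hr => ?_
      have : M < ‖r • ω‖ := by
        rw [norm_smul, hω, mul_one, Real.norm_eq_abs]
        by_contra h
        exact hr (abs_le.1 (not_lt.1 h))
      simp [hM _ this]
    refine Eq.trans ?_ (aux_line _ hcd hcs R hR)
    refine setIntegral_congr_fun (measurableSet_Ioi (a := (0:ℝ))) fun r hr => ?_
    have hr0 : 0 < r := hr
    have hn : ‖r • ω‖ = r := by rw [norm_smul, hω, mul_one, Real.norm_eq_abs, abs_of_pos hr0]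
    have hrd : radDeriv φ (r • ω) = fderiv ℝ φ (r • ω) ω := by
      rw [radDeriv, hn, map_smul, smul_smul, inv_mul_cancel₀ hr0.ne', one_smul]
    simp only [hn, hrd, (aux_deriv φ hs ω r).deriv]
  have hpt : ∀ x : EuclideanSpace ℝ (Fin 3),
      tCut R ‖x‖ * ‖x‖ * ‖radDeriv φ x + (‖x‖)⁻¹ • φ x‖ ^ 2 =
      tCut R ‖x‖ * ‖x‖ * ‖radDeriv φ x‖ ^ 2 +
      tCut R ‖x‖ * (2 * (inner ℂ (φ x) (radDeriv φ x)).re) +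
      tCut R ‖x‖ * ‖φ x‖ ^ 2 / ‖x‖ := by
    intro x
    rcases eq_or_ne x 0 with rfl | hx
    · simp [radDeriv]
    have hx' : ‖x‖ ≠ 0 := norm_ne_zero_iff.2 hx
    have hsm : (‖x‖)⁻¹ • φ x = (((‖x‖)⁻¹ : ℝ) : ℂ) • φ x := by
      ext i
      simp
    have hre : (inner ℂ (radDeriv φ x) (φ x)).re = (inner ℂ (φ x) (radDeriv φ x)).re :=
      inner_re_symm (𝕜 := ℂ) _ _
    rw [hsm, norm_add_sq (𝕜 := ℂ), inner_smul_right, norm_smul, RCLike.re_to_complex,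
      Complex.re_ofReal_mul, hre, Complex.norm_real, norm_inv, norm_norm]
    field_simp
  have hid : (∫ x : EuclideanSpace ℝ (Fin 3),
        tCut R ‖x‖ * ‖x‖ * ‖radDeriv φ x + (‖x‖)⁻¹ • φ x‖ ^ 2) =
      (∫ x : EuclideanSpace ℝ (Fin 3), tCut R ‖x‖ * ‖x‖ * ‖radDeriv φ x‖ ^ 2) -
      (∫ x : EuclideanSpace ℝ (Fin 3), tCut R ‖x‖ * ‖φ x‖ ^ 2 / ‖x‖) -
      (∫ x : EuclideanSpace ℝ (Fin 3), tCut' R ‖x‖ * ‖φ x‖ ^ 2) := by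
    have I14 : Integrable (fun x => tCut R ‖x‖ * ‖x‖ * ‖radDeriv φ x‖ ^ 2 +
        tCut R ‖x‖ * (2 * (inner ℂ (φ x) (radDeriv φ x)).re)) := I1.add I4
    have I43 : Integrable (fun x => tCut R ‖x‖ * (2 * (inner ℂ (φ x) (radDeriv φ x)).re) +
        tCut' R ‖x‖ * ‖φ x‖ ^ 2) := I4.add I3
    rw [integral_congr_ae (.of_forall hpt), integral_add I14 I2, integral_add I1 I4]
    rw [integral_add I43 (I2.const_mul 2), integral_add I4 I3,
      integral_const_mul] at hzero
    linarith
  have hnn : 0 ≤ ∫ x : EuclideanSpace ℝ (Fin 3),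
        tCut R ‖x‖ * ‖x‖ * ‖radDeriv φ x + (‖x‖)⁻¹ • φ x‖ ^ 2 :=
    integral_nonneg fun x => by
      have := (aux_tCut R ‖x‖ hR).1
      positivity
  refine ⟨hnn, hid, ?_⟩
  have mS : MeasurableSet {x : EuclideanSpace ℝ (Fin 3) | R ≤ ‖x‖} :=
    measurableSet_le measurable_const measurable_norm
  have hle : ∫ x : EuclideanSpace ℝ (Fin 3), (‖φ x‖ ^ 2 / ‖x‖ + (-(1 / R)) *
      {x : EuclideanSpace ℝ (Fin 3) | R ≤ ‖x‖}.indicator (fun x => ‖φ x‖ ^ 2) x) ≤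
      ∫ x : EuclideanSpace ℝ (Fin 3),
        (tCut R ‖x‖ * ‖φ x‖ ^ 2 / ‖x‖ + tCut' R ‖x‖ * ‖φ x‖ ^ 2) := by
    refine integral_mono (I5.add ((I6.indicator mS).const_mul _)) (I2.add I3) fun x => ?_
    simp only [Set.indicator, Set.mem_ofPred_eq, tCut, tCut']
    rcases lt_trichotomy ‖x‖ R with h | h | h
    · simp [h.le, not_le.2 h]
    · simp [h]
      positivity
    · have hx : 0 < ‖x‖ := hR.trans h
      simp only [h.le, not_le.2 h, if_true, if_false]
      have h1 : R / ‖x‖ * ‖φ x‖ ^ 2 / ‖x‖ + -(R / ‖x‖ ^ 2) * ‖φ x‖ ^ 2 = 0 := by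
        field_simp
        ring
      have h2 : ‖φ x‖ ^ 2 / ‖x‖ ≤ ‖φ x‖ ^ 2 / R := by gcongr
      rw [h1]
      have h3 : -(1 / R) * ‖φ x‖ ^ 2 = - (‖φ x‖ ^ 2 / R) := by ring
      linarith
  rw [integral_add I5 ((I6.indicator mS).const_mul _), integral_const_mul,
    integral_indicator mS, integral_add I2 I3] at hle
  linarith
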